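/- Let M ≥ 2, let μ̂_j = A_j y + b_j (j = 1,…,M) be affine estimators with ‖A_j‖_op ≤ 1, with noise ξ ~ N(0, σ² I_n), and let π = (π_1,…,π_M) be a probability vector in the simplex Λ^M. Let θ̂_π be any minimizer over Λ^M of V(θ) = H_pen(θ) + 46σ² Σ_{j=1}^M θ_j log(1/π_j). Then for every x > 0, with probability at least 1 − 2exp(−x), ‖μ̂_{θ̂_π} − f‖² ≤ min_{j=1,…,M} ( ‖μ̂_j − f‖² + 92σ² log(1/π_j) ) + 46σ² x. -/

import Mathlib

open MeasureTheory ProbabilityTheory Finset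

noncomputable section

/-- Squared Euclidean norm on `Fin n → ℝ`. -/
def sqNorm {n : ℕ} (v : Fin n → ℝ) : ℝ := ∑ i, (v i) ^ 2

/-- The simplex `Λ^M` of probability vectors in `ℝ^M`. -/
def simplex (M : ℕ) : Set (Fin M → ℝ) := {θ | (∀ j, 0 ≤ θ j) ∧ ∑ j, θ j = 1}

/-- Operator norm (ℓ²→ℓ²) of a square matrix. -/
def opNorm {n : ℕ} (A : Matrix (Fin n) (Fin n) ℝ) : ℝ :=
  sSup {c | ∃ x : Fin n → ℝ, sqNorm x ≤ 1 ∧ c = Real.sqrt (sqNorm (A.mulVec x))}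

/-- The distribution of a vector with i.i.d. `N(0,σ²)` coordinates. -/
def gaussPi (n : ℕ) (σ : ℝ) : Measure (Fin n → ℝ) :=
  Measure.pi fun _ => gaussianReal 0 ⟨σ ^ 2, sq_nonneg σ⟩

/-- The aggregated affine estimator `μ̂_θ = A_θ y + b_θ = ∑_j θ_j (A_j y + b_j)`. -/
def muV {n M : ℕ} (A : Fin M → Matrix (Fin n) (Fin n) ℝ) (b : Fin M → Fin n → ℝ)
    (y : Fin n → ℝ) (θ : Fin M → ℝ) : Fin n → ℝ :=
  ∑ j, θ j • ((A j).mulVec y + b j)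

/-- Mallows' `C_p` criterion. -/
def Cp {n M : ℕ} (A : Fin M → Matrix (Fin n) (Fin n) ℝ) (b : Fin M → Fin n → ℝ)
    (σ : ℝ) (y : Fin n → ℝ) (θ : Fin M → ℝ) : ℝ :=
  sqNorm (muV A b y θ) - 2 * ∑ i, y i * muV A b y θ i
    + 2 * σ ^ 2 * ∑ j, θ j * (A j).trace

/-- The penalty `pen(θ) = ∑_j θ_j ‖μ̂_θ - μ̂_j‖²`. -/
def pen {n M : ℕ} (A : Fin M → Matrix (Fin n) (Fin n) ℝ) (b : Fin M → Fin n → ℝ)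
    (y : Fin n → ℝ) (θ : Fin M → ℝ) : ℝ :=
  ∑ j, θ j * sqNorm (muV A b y θ - ((A j).mulVec y + b j))

/-- The penalized criterion `H_pen(θ) = C_p(θ) + pen(θ)/2`. -/
def Hpen {n M : ℕ} (A : Fin M → Matrix (Fin n) (Fin n) ℝ) (b : Fin M → Fin n → ℝ)
    (σ : ℝ) (y : Fin n → ℝ) (θ : Fin M → ℝ) : ℝ :=
  Cp A b σ y θ + pen A b y θ / 2

lemma sqNorm_eq {n : ℕ} (v : Fin n → ℝ) : sqNorm v = v ⬝ᵥ v := by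
  simp [sqNorm, dotProduct, pow_two]

lemma sqNorm_nonneg' {n : ℕ} (v : Fin n → ℝ) : 0 ≤ sqNorm v :=
  Finset.sum_nonneg fun _ _ => sq_nonneg _

lemma dot_sq_le {n : ℕ} (u v : Fin n → ℝ) : (u ⬝ᵥ v) ^ 2 ≤ sqNorm u * sqNorm v :=
  Finset.sum_mul_sq_le_sq_mul_sq _ _ _

lemma gauss1 (a w : ℝ) (ha : a < 1 / 2) :
    Integrable (fun x : ℝ => Real.exp (a * x ^ 2 + w * x)) (gaussianReal 0 1) ∧
    ∫ x, Real.exp (a * x ^ 2 + w * x) ∂(gaussianReal 0 1) =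
      Real.sqrt (1 / (1 - 2 * a)) * Real.exp (w ^ 2 / (2 * (1 - 2 * a))) := by
  have h0 : 0 < 1 - 2 * a := by linarith
  set v : NNReal := ⟨1 / (1 - 2 * a), by positivity⟩ with hv
  have hvr : (v : ℝ) = 1 / (1 - 2 * a) := rfl
  have hv0 : v ≠ 0 := by
    intro h
    have : (v : ℝ) = 0 := by rw [h]; rfl
    rw [hvr] at this
    have : 0 < 1 / (1 - 2 * a) := by positivity
    linarith
  have key : ∀ x : ℝ, gaussianPDFReal 0 1 x * Real.exp (a * x ^ 2 + w * x) =
      (Real.sqrt (1 / (1 - 2 * a)) * Real.exp (w ^ 2 / (2 * (1 - 2 * a)))) *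
        gaussianPDFReal (w / (1 - 2 * a)) v x := by
    intro x
    simp only [gaussianPDFReal, hvr]
    have e1 : Real.sqrt (2 * Real.pi * (1 / (1 - 2 * a))) =
      Real.sqrt (2 * Real.pi) * Real.sqrt (1 / (1 - 2 * a)) := by
        rw [Real.sqrt_mul (by positivity)]
    have hs : 0 < Real.sqrt (1 / (1 - 2 * a)) := Real.sqrt_pos.2 (by positivity)
    have hp : 0 < Real.sqrt (2 * Real.pi) := Real.sqrt_pos.2 (by positivity)
    rw [e1, mul_assoc, ← Real.exp_add]
    have e2 : ∀ E1 E2 s p : ℝ, s * E1 * ((p * s)⁻¹ * E2) = s * (p * s)⁻¹ * (E1 * E2) := by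
      intros; ring
    rw [e2, ← Real.exp_add]
    congr 1
    · simp only [NNReal.coe_one, mul_one]
      field_simp
    · congr 1
      simp only [NNReal.coe_one]
      field_simp
      ring
  constructor
  · rw [gaussianReal_of_var_ne_zero _ one_ne_zero]
    rw [integrable_withDensity_iff_integrable_smul' (measurable_gaussianPDF _ _)
      (ae_of_all _ fun _ ↦ gaussianPDF_lt_top)]
    simp only [toReal_gaussianPDF, smul_eq_mul, key]
    exact (integrable_gaussianPDFReal _ _).const_mul _
  · rw [integral_gaussianReal_eq_integral_smul one_ne_zero]
    simp only [smul_eq_mul, key]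
    rw [integral_const_mul, integral_gaussianPDFReal_eq_one _ hv0, mul_one]

lemma gauss1_le (a w : ℝ) (ha : |a| ≤ 6 / 46) :
    ∫ x, Real.exp (a * x ^ 2 + w * x) ∂(gaussianReal 0 1) ≤
      Real.exp (a + 2 * a ^ 2 + 46 / 68 * w ^ 2) := by
  obtain ⟨h1, h2⟩ := abs_le.1 ha
  rw [(gauss1 a w (by linarith)).2, Real.exp_add]
  have h0 : 0 < 1 - 2 * a := by linarith
  apply mul_le_mul _ _ (Real.exp_pos _).le (Real.exp_pos _).le
  · apply Real.sqrt_le_iff.2 ⟨(Real.exp_pos _).le, ?_⟩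
    rw [← Real.exp_nat_mul, div_le_iff₀ h0]
    have e : ((2 : ℕ) : ℝ) * (a + 2 * a ^ 2) = 2 * a + (2 * a) ^ 2 := by push_cast; ring
    rw [e]
    rcases le_total 0 a with hs | hs
    · have := Real.quadratic_le_exp_of_nonneg (x := 2 * a + (2 * a) ^ 2) (by positivity)
      refine le_trans ?_ (mul_le_mul_of_nonneg_right this h0.le)
      have h3 : (1 + (2 * a + (2 * a) ^ 2) + (2 * a + (2 * a) ^ 2) ^ 2 / 2) * (1 - 2 * a) - 1 =
        2 * a ^ 2 * ((1 - 6 * a) + 4 * a * (1 - 2 * a) + (2 * a) ^ 2 * (1 - 2 * a)) := by ring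
      have h4 : 0 ≤ 2 * a ^ 2 * ((1 - 6 * a) + 4 * a * (1 - 2 * a) + (2 * a) ^ 2 * (1 - 2 * a)) := by
        have : 0 ≤ 1 - 6 * a := by linarith
        positivity
      linarith
    · have := Real.add_one_le_exp (2 * a + (2 * a) ^ 2)
      refine le_trans ?_ (mul_le_mul_of_nonneg_right this h0.le)
      have h3 : (2 * a + (2 * a) ^ 2 + 1) * (1 - 2 * a) = 1 + 8 * (a ^ 2 * (-a)) := by ring
      have h4 : 0 ≤ a ^ 2 * (-a) := mul_nonneg (sq_nonneg _) (by linarith)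
      linarith
  · apply Real.exp_le_exp.2
    rw [div_le_iff₀ (by positivity)]
    nlinarith [sq_nonneg w]

lemma rot {n : ℕ} {Q : Matrix (Fin n) (Fin n) ℝ} (hQ : Q.IsHermitian) :
    (Measure.pi fun _ : Fin n => gaussianReal 0 1).map
      (fun x => (hQ.eigenvectorUnitary : Matrix (Fin n) (Fin n) ℝ).mulVec x) =
    Measure.pi fun _ : Fin n => gaussianReal 0 1 := by
  have h := stdGaussian_eq_map_pi_orthonormalBasis hQ.eigenvectorBasis
  rw [← map_pi_eq_stdGaussian] at h
  have h2 := congrArg (fun μ => Measure.map (WithLp.ofLp : EuclideanSpace ℝ (Fin n) → Fin n → ℝ) μ) h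
  simp only at h2
  rw [Measure.map_map (by fun_prop) (by fun_prop), Measure.map_map (by fun_prop) (by fun_prop)] at h2
  have e1 : ((WithLp.ofLp : EuclideanSpace ℝ (Fin n) → Fin n → ℝ) ∘ WithLp.toLp 2) = id := rfl
  rw [e1, Measure.map_id] at h2
  conv_rhs => rw [h2]
  congr 1
  ext x i
  simp [Matrix.mulVec, dotProduct, mul_comm]

lemma chi {n : ℕ} (Q : Matrix (Fin n) (Fin n) ℝ) (hQ : Q.IsHermitian) (v : Fin n → ℝ)
    (hb : ∀ x, sqNorm (Q.mulVec x) ≤ 36 * sqNorm x) :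
    ∫⁻ g, ENNReal.ofReal (Real.exp ((g ⬝ᵥ Q.mulVec g + v ⬝ᵥ g) / 46))
      ∂(Measure.pi fun _ : Fin n => gaussianReal 0 1) ≤
    ENNReal.ofReal (Real.exp (Q.trace / 46 + 2 * (Q * Q).trace / 46 ^ 2
      + 46 / 68 * (sqNorm v / 46 ^ 2))) := by
  set U : Matrix (Fin n) (Fin n) ℝ := (hQ.eigenvectorUnitary : Matrix (Fin n) (Fin n) ℝ) with hU
  set d := hQ.eigenvalues with hd
  have hUU : U.transpose * U = 1 := by
    have := Unitary.coe_star_mul_self hQ.eigenvectorUnitary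
    simpa [Matrix.star_eq_conjTranspose] using this
  have hUU' : U * U.transpose = 1 := by
    have := Unitary.coe_mul_star_self hQ.eigenvectorUnitary
    simpa [Matrix.star_eq_conjTranspose] using this
  have hsp : Q = U * Matrix.diagonal d * U.transpose := by
    have := hQ.spectral_theorem
    rw [Unitary.conjStarAlgAut_apply] at this
    simpa [Matrix.star_eq_conjTranspose] using! this
  have hsp2 : Q * Q = U * Matrix.diagonal (fun i => d i ^ 2) * U.transpose := by
    calc Q * Q = U * Matrix.diagonal d * (U.transpose * U) * Matrix.diagonal d * U.transpose := by
          conv_lhs => rw [hsp]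
          simp only [Matrix.mul_assoc]
      _ = _ := by
          rw [hUU, Matrix.mul_one, Matrix.mul_assoc U, Matrix.diagonal_mul_diagonal]
          simp only [pow_two]
  have htr : Q.trace = ∑ i, d i := by
    conv_lhs => rw [hsp]
    rw [Matrix.trace_mul_comm, ← Matrix.mul_assoc, hUU, Matrix.one_mul, Matrix.trace_diagonal]
  have htr2 : (Q * Q).trace = ∑ i, d i ^ 2 := by
    rw [hsp2, Matrix.trace_mul_comm, ← Matrix.mul_assoc, hUU, Matrix.one_mul, Matrix.trace_diagonal]
  set w := U.transpose.mulVec v with hw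
  have hww : ∑ i, w i ^ 2 = sqNorm v := by
    have : sqNorm w = sqNorm v := by
      rw [sqNorm_eq, sqNorm_eq, hw, Matrix.dotProduct_mulVec, Matrix.vecMul_transpose,
        Matrix.mulVec_mulVec, hUU', Matrix.one_mulVec]
    exact this
  have hdle : ∀ i, |d i| ≤ 6 := by
    intro i
    have h1 := hb (hQ.eigenvectorBasis i)
    rw [hQ.mulVec_eigenvectorBasis] at h1
    have h2 : sqNorm (⇑(hQ.eigenvectorBasis i)) = 1 := by
      have := hQ.eigenvectorBasis.orthonormal.1 i
      have h3 := EuclideanSpace.real_norm_sq_eq (hQ.eigenvectorBasis i)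
      rw [this] at h3
      simp only [sqNorm]
      linarith
    have h3 : sqNorm (d i • ⇑(hQ.eigenvectorBasis i)) = d i ^ 2 * sqNorm (⇑(hQ.eigenvectorBasis i)) := by
      simp [sqNorm, mul_pow, Finset.mul_sum]
    rw [← hd, h3, h2] at h1
    exact abs_le_of_sq_le_sq (by linarith) (by norm_num)
  have hform : ∀ x, (U.mulVec x ⬝ᵥ Q.mulVec (U.mulVec x) + v ⬝ᵥ U.mulVec x) / 46 =
      ∑ i, (d i / 46 * x i ^ 2 + w i / 46 * x i) := by
    intro x
    have e1 : Q.mulVec (U.mulVec x) = U.mulVec ((Matrix.diagonal d).mulVec x) := by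
      rw [Matrix.mulVec_mulVec, Matrix.mulVec_mulVec]
      congr 1
      conv_lhs => rw [hsp]
      rw [Matrix.mul_assoc, hUU, Matrix.mul_one]
    have e2 : U.mulVec x ⬝ᵥ Q.mulVec (U.mulVec x) = x ⬝ᵥ (Matrix.diagonal d).mulVec x := by
      rw [e1, Matrix.dotProduct_mulVec, ← Matrix.mulVec_transpose, Matrix.mulVec_mulVec, hUU,
        Matrix.one_mulVec]
    have e3 : v ⬝ᵥ U.mulVec x = w ⬝ᵥ x := by
      rw [Matrix.dotProduct_mulVec, ← Matrix.mulVec_transpose]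
    rw [e2, e3]
    simp only [dotProduct, Matrix.mulVec_diagonal]
    rw [← Finset.sum_add_distrib, Finset.sum_div]
    exact Finset.sum_congr rfl fun i _ => by ring
  have hmeas : Measurable (fun g : Fin n → ℝ =>
      ENNReal.ofReal (Real.exp ((g ⬝ᵥ Q.mulVec g + v ⬝ᵥ g) / 46))) := by
    simp only [dotProduct, Matrix.mulVec]
    fun_prop
  have hmU : Measurable (fun x : Fin n → ℝ => U.mulVec x) := by
    apply measurable_pi_lambda
    intro i
    simp only [dotProduct, Matrix.mulVec]
    fun_prop
  rw [← rot hQ, lintegral_map hmeas hmU]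
  simp only [hform, Real.exp_sum]
  have hda : ∀ i, |d i / 46| ≤ 6 / 46 := by
    intro i
    rw [abs_div, abs_of_pos (by norm_num : (0 : ℝ) < 46)]
    have := hdle i
    linarith
  have hint : Integrable (fun x : Fin n → ℝ => ∏ i, Real.exp (d i / 46 * x i ^ 2 + w i / 46 * x i))
      (Measure.pi fun _ : Fin n => gaussianReal 0 1) := by
    apply Integrable.fintype_prod (f := fun i (t : ℝ) => Real.exp (d i / 46 * t ^ 2 + w i / 46 * t))
    intro i
    exact (gauss1 _ _ (by have := (abs_le.1 (hda i)).2; linarith)).1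
  rw [← ofReal_integral_eq_lintegral_ofReal hint
    (ae_of_all _ fun x => Finset.prod_nonneg fun i _ => (Real.exp_pos _).le)]
  apply ENNReal.ofReal_le_ofReal
  rw [integral_fintype_prod_eq_prod
    (f := fun i (t : ℝ) => Real.exp (d i / 46 * t ^ 2 + w i / 46 * t))]
  calc _ ≤ ∏ i, Real.exp (d i / 46 + 2 * (d i / 46) ^ 2 + 46 / 68 * (w i / 46) ^ 2) :=
        Finset.prod_le_prod (fun i _ => integral_nonneg fun _ => (Real.exp_pos _).le)
          fun i _ => gauss1_le _ _ (hda i)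
    _ = _ := by
        rw [← Real.exp_sum, htr, htr2, ← hww]
        congr 1
        simp only [Finset.sum_add_distrib, div_pow, Finset.sum_div, Finset.mul_sum]
        congr 1
        congr 1
        exact Finset.sum_congr rfl fun i _ => by ring

lemma sqNorm_transpose_le {n : ℕ} (B : Matrix (Fin n) (Fin n) ℝ)
    (hB : ∀ x, sqNorm (B.mulVec x) ≤ 4 * sqNorm x) (x : Fin n → ℝ) :
    sqNorm (B.transpose.mulVec x) ≤ 4 * sqNorm x := by
  have h1 : sqNorm (B.transpose.mulVec x) = x ⬝ᵥ B.mulVec (B.transpose.mulVec x) := by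
    rw [sqNorm_eq, Matrix.dotProduct_mulVec x, ← Matrix.mulVec_transpose]
  have h2 := dot_sq_le x (B.mulVec (B.transpose.mulVec x))
  rw [← h1] at h2
  have h3 := hB (B.transpose.mulVec x)
  have h4 := sqNorm_nonneg' x
  have h5 := sqNorm_nonneg' (B.transpose.mulVec x)
  set s := sqNorm (B.transpose.mulVec x)
  rcases h5.eq_or_lt with h | h
  · rw [← h]; positivity
  · have : s * s ≤ (4 * sqNorm x) * s := by nlinarith
    exact le_of_mul_le_mul_right this h

lemma sqNorm_three {n : ℕ} (a b c : Fin n → ℝ) :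
    sqNorm (a + b - (1 / 2 : ℝ) • c) ≤ 3 * (sqNorm a + sqNorm b + sqNorm c / 4) := by
  simp only [sqNorm, Finset.sum_div, ← Finset.sum_add_distrib, Finset.mul_sum]
  apply Finset.sum_le_sum
  intro i _
  simp only [Pi.add_apply, Pi.sub_apply, Pi.smul_apply, smul_eq_mul]
  nlinarith [sq_nonneg (a i - b i), sq_nonneg (a i + c i / 2), sq_nonneg (b i + c i / 2)]

/-- The centred process for one pair. -/
def Zp {n : ℕ} (B : Matrix (Fin n) (Fin n) ℝ) (c : Fin n → ℝ) (s : ℝ) (g : Fin n → ℝ) : ℝ :=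
  2 * (g ⬝ᵥ (B.mulVec g + c)) - 2 * s ^ 2 * B.trace - sqNorm (B.mulVec g + c) / 2

lemma measurable_Zp {n : ℕ} (B : Matrix (Fin n) (Fin n) ℝ) (c : Fin n → ℝ) (s : ℝ) :
    Measurable (Zp B c s) := by
  unfold Zp sqNorm
  simp only [dotProduct, Matrix.mulVec, Pi.add_apply]
  fun_prop

lemma main1 {n : ℕ} (B : Matrix (Fin n) (Fin n) ℝ)
    (hB : ∀ x, sqNorm (B.mulVec x) ≤ 4 * sqNorm x) (c : Fin n → ℝ) :
    ∫⁻ g, ENNReal.ofReal (Real.exp (Zp B c 1 g / 46))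
      ∂(Measure.pi fun _ : Fin n => gaussianReal 0 1) ≤ 1 := by
  have hBt := sqNorm_transpose_le B hB
  set Q := B + B.transpose - (1 / 2 : ℝ) • (B.transpose * B) with hQdef
  set v := (2 : ℝ) • c - B.transpose.mulVec c with hv
  have hQt : Q.transpose = Q := by
    simp [hQdef, add_comm]
  have hQ : Q.IsHermitian := by
    rw [Matrix.IsHermitian, Matrix.conjTranspose_eq_transpose_of_trivial, hQt]
  have hQx : ∀ x, Q.mulVec x = B.mulVec x + B.transpose.mulVec x
      - (1 / 2 : ℝ) • B.transpose.mulVec (B.mulVec x) := by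
    intro x
    rw [hQdef, Matrix.sub_mulVec, Matrix.add_mulVec, Matrix.smul_mulVec, Matrix.mulVec_mulVec]
  have hb : ∀ x, sqNorm (Q.mulVec x) ≤ 36 * sqNorm x := by
    intro x
    rw [hQx]
    refine (sqNorm_three _ _ _).trans ?_
    have := hB x
    have := hBt x
    have := hBt (B.mulVec x)
    linarith
  set F := ∑ i, ∑ j, B i j ^ 2 with hF
  have hF0 : 0 ≤ F := Finset.sum_nonneg fun _ _ => Finset.sum_nonneg fun _ _ => sq_nonneg _
  have hcol : ∀ (M : Matrix (Fin n) (Fin n) ℝ) j, sqNorm (M.mulVec (Pi.single j 1)) = ∑ i, M i j ^ 2 := by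
    intro M j
    simp [sqNorm]
  have hFr : (Q * Q).trace ≤ 9 * F := by
    have e1 : (Q * Q).trace = ∑ j, sqNorm (Q.mulVec (Pi.single j 1)) := by
      have : (Q * Q).trace = (Q.transpose * Q).trace := by rw [hQt]
      rw [this]
      simp only [hcol, Matrix.trace, Matrix.diag, Matrix.mul_apply, Matrix.transpose_apply, pow_two]
    have e2 : ∑ j, sqNorm (B.mulVec (Pi.single j 1)) = F := by
      simp only [hcol]
      rw [hF, Finset.sum_comm]
    have e3 : ∑ j, sqNorm (B.transpose.mulVec (Pi.single j 1)) = F := by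
      simp only [hcol, Matrix.transpose_apply]
      rw [hF]
    rw [e1]
    calc _ ≤ ∑ j, 3 * (sqNorm (B.mulVec (Pi.single j 1)) + sqNorm (B.transpose.mulVec (Pi.single j 1))
            + sqNorm (B.mulVec (Pi.single j 1))) := by
          apply Finset.sum_le_sum
          intro j _
          rw [hQx]
          refine (sqNorm_three _ _ _).trans ?_
          have := hBt (B.mulVec (Pi.single j 1))
          linarith
      _ = _ := by
          rw [← Finset.mul_sum, Finset.sum_add_distrib, Finset.sum_add_distrib, e2, e3]
          ring
  have htr : Q.trace = 2 * B.trace - F / 2 := by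
    rw [hQdef, Matrix.trace_sub, Matrix.trace_add, Matrix.trace_transpose, Matrix.trace_smul]
    have : (B.transpose * B).trace = F := by
      simp only [Matrix.trace, Matrix.diag, Matrix.mul_apply, Matrix.transpose_apply, ← pow_two]
      rw [hF, Finset.sum_comm]
    rw [this, smul_eq_mul]
    ring
  have hvn : sqNorm v ≤ 16 * sqNorm c := by
    have h1 : sqNorm v ≤ 2 * (4 * sqNorm c + sqNorm (B.transpose.mulVec c)) := by
      rw [hv]
      simp only [sqNorm, ← Finset.sum_add_distrib, Finset.mul_sum]
      apply Finset.sum_le_sum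
      intro i _
      simp only [Pi.sub_apply, Pi.smul_apply, smul_eq_mul]
      nlinarith [sq_nonneg (2 * c i + B.transpose.mulVec c i)]
    have := hBt c
    linarith
  have hZ : ∀ g, Zp B c 1 g = (g ⬝ᵥ Q.mulVec g + v ⬝ᵥ g) - (2 * B.trace + sqNorm c / 2) := by
    intro g
    have a1 : g ⬝ᵥ B.transpose.mulVec g = g ⬝ᵥ B.mulVec g := by
      rw [Matrix.dotProduct_mulVec, Matrix.vecMul_transpose, dotProduct_comm]
    have a2 : g ⬝ᵥ B.transpose.mulVec (B.mulVec g) = B.mulVec g ⬝ᵥ B.mulVec g := by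
      rw [Matrix.dotProduct_mulVec, Matrix.vecMul_transpose]
    have a3 : B.transpose.mulVec c ⬝ᵥ g = c ⬝ᵥ B.mulVec g := by
      rw [Matrix.dotProduct_mulVec, Matrix.mulVec_transpose]
    rw [Zp, hQx, hv, sqNorm_eq, sqNorm_eq]
    simp only [dotProduct_add, dotProduct_sub, dotProduct_smul, add_dotProduct, sub_dotProduct,
      smul_dotProduct, smul_eq_mul, a1, a2, a3]
    rw [dotProduct_comm g c, dotProduct_comm (B.mulVec g) c]
    ring
  have hsplit : ∀ g, ENNReal.ofReal (Real.exp (Zp B c 1 g / 46)) =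
      ENNReal.ofReal (Real.exp (-(2 * B.trace + sqNorm c / 2) / 46)) *
      ENNReal.ofReal (Real.exp ((g ⬝ᵥ Q.mulVec g + v ⬝ᵥ g) / 46)) := by
    intro g
    rw [← ENNReal.ofReal_mul (Real.exp_pos _).le, ← Real.exp_add, hZ]
    congr 2
    ring
  simp only [hsplit]
  rw [lintegral_const_mul' _ _ ENNReal.ofReal_ne_top]
  refine (mul_le_mul_right (chi Q hQ v hb) _).trans ?_
  rw [← ENNReal.ofReal_mul (Real.exp_pos _).le, ← Real.exp_add, ENNReal.ofReal_le_one,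
    Real.exp_le_one_iff, htr]
  have := sqNorm_nonneg' c
  linarith

lemma tail1 {n : ℕ} (B : Matrix (Fin n) (Fin n) ℝ)
    (hB : ∀ x, sqNorm (B.mulVec x) ≤ 4 * sqNorm x) (c : Fin n → ℝ) (t : ℝ) :
    (Measure.pi fun _ : Fin n => gaussianReal 0 1) {g | 46 * t < Zp B c 1 g} ≤
      ENNReal.ofReal (Real.exp (-t)) := by
  have hm : Measurable fun g => ENNReal.ofReal (Real.exp (Zp B c 1 g / 46)) := by
    have := measurable_Zp B c 1
    fun_prop
  have h := (mul_meas_ge_le_lintegral (μ := Measure.pi fun _ : Fin n => gaussianReal 0 1) hm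
    (ENNReal.ofReal (Real.exp t))).trans (main1 B hB c)
  have hsub : {g | 46 * t < Zp B c 1 g} ⊆
      {g | ENNReal.ofReal (Real.exp t) ≤ ENNReal.ofReal (Real.exp (Zp B c 1 g / 46))} := by
    intro g hg
    simp only [Set.mem_ofPred_eq] at hg ⊢
    apply ENNReal.ofReal_le_ofReal
    apply Real.exp_le_exp.2
    linarith
  refine (measure_mono hsub).trans ?_
  rw [Real.exp_neg, ENNReal.ofReal_inv_of_pos (Real.exp_pos _)]
  rw [ENNReal.le_inv_iff_mul_le, mul_comm]
  exact h

lemma tailσ {n : ℕ} (σ : ℝ) (B : Matrix (Fin n) (Fin n) ℝ)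
    (hB : ∀ x, sqNorm (B.mulVec x) ≤ 4 * sqNorm x) (c : Fin n → ℝ) (t : ℝ) :
    gaussPi n σ {g | 46 * σ ^ 2 * t < Zp B c σ g} ≤ ENNReal.ofReal (Real.exp (-t)) := by
  have hmap : gaussPi n σ = (Measure.pi fun _ : Fin n => gaussianReal 0 1).map
      (fun x i => σ * x i) := by
    rw [Measure.pi_map_pi (f := fun _ (x : ℝ) => σ * x) (fun i => by fun_prop)]
    unfold gaussPi
    congr 1
    ext1 i
    rw [gaussianReal_map_const_mul]
    simp
    rfl
  have hms : MeasurableSet {g | 46 * σ ^ 2 * t < Zp B c σ g} :=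
    measurableSet_lt measurable_const (measurable_Zp B c σ)
  rw [hmap, Measure.map_apply (by fun_prop) hms]
  by_cases hσ : σ = 0
  · have : ((fun (x : Fin n → ℝ) i => σ * x i) ⁻¹' {g | 46 * σ ^ 2 * t < Zp B c σ g}) = ∅ := by
      ext x
      simp only [Set.mem_preimage, Set.mem_ofPred_eq, Set.mem_empty_iff_false, iff_false, not_lt]
      have hx : (fun i => σ * x i) = 0 := by ext i; simp [hσ]
      rw [hx, hσ]
      have := sqNorm_nonneg' c
      simp [Zp]
      linarith
    rw [this]
    simp
  · have : ((fun (x : Fin n → ℝ) i => σ * x i) ⁻¹' {g | 46 * σ ^ 2 * t < Zp B c σ g}) =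
        {g | 46 * t < Zp B (σ⁻¹ • c) 1 g} := by
      ext x
      simp only [Set.mem_preimage, Set.mem_ofPred_eq]
      have e : Zp B c σ (fun i => σ * x i) = σ ^ 2 * Zp B (σ⁻¹ • c) 1 x := by
        have hx : (fun i => σ * x i) = σ • x := rfl
        have hc : c = σ • (σ⁻¹ • c) := by rw [smul_smul, mul_inv_cancel₀ hσ, one_smul]
        rw [hx]
        conv_lhs => rw [hc]
        rw [Zp, Zp, sqNorm_eq, sqNorm_eq, Matrix.mulVec_smul, ← smul_add]
        simp only [smul_dotProduct, dotProduct_smul, smul_eq_mul]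
        ring
      rw [e]
      have : 0 < σ ^ 2 := by positivity
      constructor
      · intro h
        exact lt_of_mul_lt_mul_left (by linarith) this.le
      · intro h
        have := mul_lt_mul_of_pos_left h this
        linarith
    rw [this]
    exact tail1 B hB _ t

lemma opNorm_bound {n : ℕ} (A : Matrix (Fin n) (Fin n) ℝ) (h : opNorm A ≤ 1) (x : Fin n → ℝ) :
    sqNorm (A.mulVec x) ≤ sqNorm x := by
  have hbdd : BddAbove {c | ∃ x : Fin n → ℝ, sqNorm x ≤ 1 ∧ c = Real.sqrt (sqNorm (A.mulVec x))} := by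
    refine ⟨Real.sqrt (∑ i, sqNorm (A i)), ?_⟩
    rintro c ⟨y, hy, rfl⟩
    apply Real.sqrt_le_sqrt
    apply Finset.sum_le_sum
    intro i _
    refine (dot_sq_le (A i) y).trans ?_
    have := sqNorm_nonneg' (A i)
    nlinarith
  have hs : ∀ (r : ℝ) (u : Fin n → ℝ), sqNorm (r • u) = r ^ 2 * sqNorm u := by
    intro r u
    simp [sqNorm, mul_pow, Finset.mul_sum]
  rcases (sqNorm_nonneg' x).eq_or_lt with h0 | h0
  · have : x = 0 := by
      ext i
      have := (Finset.sum_eq_zero_iff_of_nonneg (fun i _ => sq_nonneg (x i))).1 h0.symm i (Finset.mem_univ i)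
      simpa using this
    subst this
    simp
  · have hr : 0 < Real.sqrt (sqNorm x) := Real.sqrt_pos.2 h0
    have hr2 : Real.sqrt (sqNorm x) ^ 2 = sqNorm x := Real.sq_sqrt h0.le
    have h1 : Real.sqrt (sqNorm (A.mulVec ((Real.sqrt (sqNorm x))⁻¹ • x))) ≤ 1 := by
      refine (le_csSup hbdd ⟨_, ?_, rfl⟩).trans h
      rw [hs, inv_pow, hr2, inv_mul_cancel₀ h0.ne']
    rw [Matrix.mulVec_smul, hs, inv_pow, hr2, Real.sqrt_le_one] at h1
    rwa [inv_mul_le_iff₀ h0, mul_one] at h1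

lemma diff_bound {n : ℕ} (A A' : Matrix (Fin n) (Fin n) ℝ) (h : opNorm A ≤ 1) (h' : opNorm A' ≤ 1)
    (x : Fin n → ℝ) : sqNorm ((A - A').mulVec x) ≤ 4 * sqNorm x := by
  have h1 := opNorm_bound A h x
  have h2 := opNorm_bound A' h' x
  have : sqNorm ((A - A').mulVec x) ≤ 2 * (sqNorm (A.mulVec x) + sqNorm (A'.mulVec x)) := by
    rw [Matrix.sub_mulVec]
    simp only [sqNorm, ← Finset.sum_add_distrib, Finset.mul_sum]
    apply Finset.sum_le_sum
    intro i _
    simp only [Pi.sub_apply]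
    nlinarith [sq_nonneg (A.mulVec x i + A'.mulVec x i)]
  linarith

lemma dot_muV {n M : ℕ} (A : Fin M → Matrix (Fin n) (Fin n) ℝ) (b : Fin M → Fin n → ℝ)
    (y u : Fin n → ℝ) (θ : Fin M → ℝ) :
    u ⬝ᵥ muV A b y θ = ∑ j, θ j * (u ⬝ᵥ ((A j).mulVec y + b j)) := by
  simp only [muV, dotProduct_sum, dotProduct_smul, smul_eq_mul]

lemma sqNorm_sub' {n : ℕ} (u v : Fin n → ℝ) :
    sqNorm (u - v) = u ⬝ᵥ u - 2 * (u ⬝ᵥ v) + v ⬝ᵥ v := by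
  rw [sqNorm_eq, sub_dotProduct, dotProduct_sub, dotProduct_sub, dotProduct_comm v u]
  ring

lemma Hpen_eq {n M : ℕ} (A : Fin M → Matrix (Fin n) (Fin n) ℝ) (b : Fin M → Fin n → ℝ)
    (σ : ℝ) (y : Fin n → ℝ) (θ : Fin M → ℝ) (hθ : ∑ j, θ j = 1) :
    Hpen A b σ y θ = (muV A b y θ ⬝ᵥ muV A b y θ) / 2 - 2 * (y ⬝ᵥ muV A b y θ)
      + 2 * σ ^ 2 * ∑ j, θ j * (A j).trace
      + (∑ j, θ j * (((A j).mulVec y + b j) ⬝ᵥ ((A j).mulVec y + b j))) / 2 := by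
  have hpen : pen A b y θ = - (muV A b y θ ⬝ᵥ muV A b y θ)
      + ∑ j, θ j * (((A j).mulVec y + b j) ⬝ᵥ ((A j).mulVec y + b j)) := by
    have h1 := dot_muV A b y (muV A b y θ) θ
    set μ := muV A b y θ with hμ
    have : pen A b y θ = (∑ j, θ j) * (μ ⬝ᵥ μ) - 2 * (∑ j, θ j * (μ ⬝ᵥ ((A j).mulVec y + b j)))
        + ∑ j, θ j * (((A j).mulVec y + b j) ⬝ᵥ ((A j).mulVec y + b j)) := by
      simp only [pen, ← hμ, sqNorm_sub', Finset.sum_mul, Finset.mul_sum]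
      rw [← Finset.sum_sub_distrib, ← Finset.sum_add_distrib]
      exact Finset.sum_congr rfl fun j _ => by ring
    rw [this, ← h1, hθ]
    ring
  have hy : ∑ i, y i * muV A b y θ i = y ⬝ᵥ muV A b y θ := rfl
  rw [Hpen, Cp, hpen, sqNorm_eq, hy]
  ring

lemma first_order (D K : ℝ) (h : ∀ t : ℝ, 0 < t → t ≤ 1 → 0 ≤ t * D + t ^ 2 * K) : 0 ≤ D := by
  by_contra hD
  push Not at hD
  have hK : 0 < K := by
    have := h 1 one_pos le_rfl
    linarith
  set t := min 1 (-D / (2 * K)) with ht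
  have hp : 0 < -D / (2 * K) := div_pos (by linarith) (by linarith)
  have ht0 : 0 < t := lt_min one_pos hp
  have h1 := h t ht0 (min_le_left _ _)
  have h2 : t * (2 * K) ≤ -D := (le_div_iff₀ (by linarith)).1 (min_le_right _ _)
  nlinarith

lemma determ {n M : ℕ} (σ : ℝ) (f : Fin n → ℝ)
    (A : Fin M → Matrix (Fin n) (Fin n) ℝ) (b : Fin M → Fin n → ℝ) (l : Fin M → ℝ)
    (ξ : Fin n → ℝ) (θ : Fin M → ℝ) (hθ : θ ∈ simplex M)
    (hmin : ∀ θ' ∈ simplex M,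
      Hpen A b σ (f + ξ) θ + 46 * σ ^ 2 * ∑ j, θ j * l j
        ≤ Hpen A b σ (f + ξ) θ' + 46 * σ ^ 2 * ∑ j, θ' j * l j) (x : ℝ) (k : Fin M)
    (hZ : ∀ j, Zp (A j - A k) ((A j - A k).mulVec f + (b j - b k)) σ ξ
      ≤ 46 * σ ^ 2 * (x + l j + l k)) :
    sqNorm (muV A b (f + ξ) θ - f) ≤ sqNorm ((A k).mulVec (f + ξ) + b k - f)
      + 92 * σ ^ 2 * l k + 46 * σ ^ 2 * x := by
  obtain ⟨hθ0, hθ1⟩ := hθ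
  set y := f + ξ with hy
  have hZ' : ∀ j, 2 * (ξ ⬝ᵥ ((A j).mulVec y + b j)) - 2 * (ξ ⬝ᵥ ((A k).mulVec y + b k))
      - 2 * σ ^ 2 * ((A j).trace - (A k).trace)
      - ((((A j).mulVec y + b j) ⬝ᵥ ((A j).mulVec y + b j))
        - 2 * (((A k).mulVec y + b k) ⬝ᵥ ((A j).mulVec y + b j))
        + (((A k).mulVec y + b k) ⬝ᵥ ((A k).mulVec y + b k))) / 2
      ≤ 46 * σ ^ 2 * (x + l j + l k) := by
    intro j
    refine le_trans (le_of_eq ?_) (hZ j)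
    have e : (A j - A k).mulVec ξ + ((A j - A k).mulVec f + (b j - b k)) =
        ((A j).mulVec y + b j) - ((A k).mulVec y + b k) := by
      rw [hy, Matrix.mulVec_add, Matrix.mulVec_add, Matrix.sub_mulVec, Matrix.sub_mulVec]
      abel
    rw [Zp, e, sqNorm_sub', dotProduct_sub, Matrix.trace_sub,
      dotProduct_comm ((A k).mulVec y + b k) ((A j).mulVec y + b j)]
    ring
  set m : Fin M → Fin n → ℝ := fun j => (A j).mulVec y + b j with hm
  set μ := muV A b y θ with hμ
  set T := ∑ j, θ j * (A j).trace with hT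
  set S := ∑ j, θ j * (m j ⬝ᵥ m j) with hS
  set Λ := ∑ j, θ j * l j with hΛ
  have hsum : 2 * (ξ ⬝ᵥ μ) - 2 * (ξ ⬝ᵥ m k) - 2 * σ ^ 2 * (T - (A k).trace)
      - (S - 2 * (m k ⬝ᵥ μ) + m k ⬝ᵥ m k) / 2 ≤ 46 * σ ^ 2 * (x + Λ + l k) := by
    have h1 := Finset.sum_le_sum fun j (_ : j ∈ Finset.univ) =>
      mul_le_mul_of_nonneg_left (hZ' j) (hθ0 j)
    have e2 : ∑ j, θ j * (46 * σ ^ 2 * (x + l j + l k)) = 46 * σ ^ 2 * (x + Λ + l k) := by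
      have : ∑ j, θ j * (46 * σ ^ 2 * (x + l j + l k)) =
        46 * σ ^ 2 * ((∑ j, θ j) * (x + l k) + Λ) := by
        rw [hΛ, Finset.sum_mul, ← Finset.sum_add_distrib, Finset.mul_sum]
        exact Finset.sum_congr rfl fun j _ => by ring
      rw [this, hθ1]
      ring
    have e1 : ∑ j, θ j * (2 * (ξ ⬝ᵥ m j) - 2 * (ξ ⬝ᵥ m k)
      - 2 * σ ^ 2 * ((A j).trace - (A k).trace)
      - ((m j ⬝ᵥ m j) - 2 * (m k ⬝ᵥ m j) + (m k ⬝ᵥ m k)) / 2) =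
      2 * (ξ ⬝ᵥ μ) - 2 * (ξ ⬝ᵥ m k) - 2 * σ ^ 2 * (T - (A k).trace)
      - (S - 2 * (m k ⬝ᵥ μ) + m k ⬝ᵥ m k) / 2 := by
      have : ∑ j, θ j * (2 * (ξ ⬝ᵥ m j) - 2 * (ξ ⬝ᵥ m k)
        - 2 * σ ^ 2 * ((A j).trace - (A k).trace)
        - ((m j ⬝ᵥ m j) - 2 * (m k ⬝ᵥ m j) + (m k ⬝ᵥ m k)) / 2) =
        2 * (∑ j, θ j * (ξ ⬝ᵥ m j)) - 2 * σ ^ 2 * T - S / 2 + ∑ j, θ j * (m k ⬝ᵥ m j)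
          + (∑ j, θ j) * (- 2 * (ξ ⬝ᵥ m k) + 2 * σ ^ 2 * (A k).trace - (m k ⬝ᵥ m k) / 2) := by
        rw [hT, hS, Finset.sum_mul, Finset.mul_sum, Finset.mul_sum, Finset.sum_div,
          ← Finset.sum_sub_distrib, ← Finset.sum_sub_distrib, ← Finset.sum_add_distrib,
          ← Finset.sum_add_distrib]
        exact Finset.sum_congr rfl fun j _ => by ring
      rw [this, hθ1, hμ, dot_muV, dot_muV]
      ring
    rw [← e1, ← e2]
    exact h1
  have hD : 0 ≤ (μ ⬝ᵥ m k - μ ⬝ᵥ μ) - 2 * (y ⬝ᵥ m k - y ⬝ᵥ μ)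
      + 2 * σ ^ 2 * ((A k).trace - T) + (m k ⬝ᵥ m k - S) / 2 + 46 * σ ^ 2 * (l k - Λ) := by
    apply first_order _ ((μ ⬝ᵥ μ - 2 * (μ ⬝ᵥ m k) + m k ⬝ᵥ m k) / 2)
    intro t ht0 ht1
    set θ' : Fin M → ℝ := fun j => (1 - t) * θ j + t * (Pi.single k 1 : Fin M → ℝ) j with hθ'
    have hlin : ∀ a : Fin M → ℝ, ∑ j, θ' j * a j = (1 - t) * ∑ j, θ j * a j + t * a k := by
      intro a
      have h1 : ∑ j, (Pi.single k 1 : Fin M → ℝ) j * a j = a k := by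
        simp [Pi.single_apply]
      rw [Finset.mul_sum]
      conv_rhs => rw [← h1]
      rw [Finset.mul_sum, ← Finset.sum_add_distrib]
      exact Finset.sum_congr rfl fun j _ => by simp only [hθ']; ring
    have hs1 : ∑ j, θ' j = 1 := by
      have := hlin (fun _ => 1)
      simp only [mul_one, hθ1] at this
      rw [this]; ring
    have hmem : θ' ∈ simplex M := by
      refine ⟨fun j => ?_, hs1⟩
      have h1 : 0 ≤ (Pi.single k 1 : Fin M → ℝ) j := by
        rw [Pi.single_apply]; split_ifs <;> norm_num
      have h2 : 0 ≤ 1 - t := by linarith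
      have := hθ0 j
      simp only [hθ']
      positivity
    have hdot : ∀ u, u ⬝ᵥ muV A b y θ' = (1 - t) * (u ⬝ᵥ μ) + t * (u ⬝ᵥ m k) := by
      intro u
      rw [dot_muV, hlin, hμ, dot_muV]
    have hq : muV A b y θ' ⬝ᵥ muV A b y θ' =
        (1 - t) ^ 2 * (μ ⬝ᵥ μ) + 2 * t * (1 - t) * (μ ⬝ᵥ m k) + t ^ 2 * (m k ⬝ᵥ m k) := by
      rw [hdot, dotProduct_comm _ μ, dotProduct_comm _ (m k), hdot, hdot, dotProduct_comm (m k) μ]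
      ring
    have h := hmin θ' hmem
    rw [Hpen_eq _ _ _ _ _ hs1, Hpen_eq _ _ _ _ _ hθ1, hq, hdot, hlin, hlin,
      hlin] at h
    simp only [← hμ, ← hT, ← hΛ] at h
    change _ + S / 2 + _ ≤ _ + ((1 - t) * S + t * (m k ⬝ᵥ m k)) / 2 + _ at h
    linarith
  have hyd : ∀ u, y ⬝ᵥ u = f ⬝ᵥ u + ξ ⬝ᵥ u := fun u => add_dotProduct _ _ _
  rw [hyd, hyd] at hD
  change sqNorm (μ - f) ≤ sqNorm (m k - f) + _ + _
  rw [sqNorm_sub', sqNorm_sub', dotProduct_comm μ f, dotProduct_comm (m k) f]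
  rw [dotProduct_comm (m k) μ] at hsum
  linarith

/-- **Theorem 5.1**: aggregation of affine estimators with prior weights. -/
theorem aggregation_with_prior_weights
    {n M : ℕ} (hM : 2 ≤ M) (σ : ℝ) (f : Fin n → ℝ)
    (A : Fin M → Matrix (Fin n) (Fin n) ℝ) (b : Fin M → Fin n → ℝ)
    (hop : ∀ j, opNorm (A j) ≤ 1)
    (π : Fin M → ℝ) (hπ : π ∈ simplex M) (hπpos : ∀ j, 0 < π j)
    {Ω : Type} [MeasurableSpace Ω] (P : Measure Ω) [IsProbabilityMeasure P]
    (ξ : Ω → Fin n → ℝ) (hξ : Measurable ξ) (hlaw : P.map ξ = gaussPi n σ)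
    (θhat : Ω → Fin M → ℝ)
    (hθmem : ∀ ω, θhat ω ∈ simplex M)
    (hθmin : ∀ ω, ∀ θ ∈ simplex M,
      Hpen A b σ (f + ξ ω) (θhat ω)
          + 46 * σ ^ 2 * ∑ j, θhat ω j * Real.log (1 / π j)
        ≤ Hpen A b σ (f + ξ ω) θ
          + 46 * σ ^ 2 * ∑ j, θ j * Real.log (1 / π j)) :
    ∀ x : ℝ, 0 < x →
      ENNReal.ofReal (1 - 2 * Real.exp (-x)) ≤
        P {ω | ∀ j, sqNorm (muV A b (f + ξ ω) (θhat ω) - f) ≤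
            sqNorm ((A j).mulVec (f + ξ ω) + b j - f)
              + 92 * σ ^ 2 * Real.log (1 / π j) + 46 * σ ^ 2 * x} := by
  intro x hx
  set l : Fin M → ℝ := fun j => Real.log (1 / π j) with hl
  set bad : Fin M → Fin M → Set (Fin n → ℝ) := fun k j =>
    {g | 46 * σ ^ 2 * (x + l j + l k) <
      Zp (A j - A k) ((A j - A k).mulVec f + (b j - b k)) σ g} with hbad
  have hbm : ∀ k j, MeasurableSet (bad k j) := fun k j =>
    measurableSet_lt measurable_const (measurable_Zp _ _ σ)
  have hexp : ∀ k j, Real.exp (-(x + l j + l k)) = Real.exp (-x) * (π j * π k) := by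
    intro k j
    have : -(x + l j + l k) = -x + (Real.log (π j) + Real.log (π k)) := by
      simp only [hl, one_div, Real.log_inv]; ring
    rw [this, Real.exp_add, Real.exp_add, Real.exp_log (hπpos j), Real.exp_log (hπpos k)]
  set E : Set Ω := ξ ⁻¹' (⋃ k, ⋃ j, bad k j) with hE
  have hEm : MeasurableSet E := hξ (MeasurableSet.iUnion fun k => MeasurableSet.iUnion fun j => hbm k j)
  have hPE : P E ≤ ENNReal.ofReal (Real.exp (-x)) := by
    rw [hE, ← Measure.map_apply hξ (MeasurableSet.iUnion fun k => MeasurableSet.iUnion fun j => hbm k j),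
      hlaw]
    calc gaussPi n σ (⋃ k, ⋃ j, bad k j) ≤ ∑ k, ∑ j, gaussPi n σ (bad k j) :=
          (measure_iUnion_fintype_le _ _).trans
            (Finset.sum_le_sum fun k _ => measure_iUnion_fintype_le _ _)
      _ ≤ ∑ k, ∑ j, ENNReal.ofReal (Real.exp (-x) * (π j * π k)) := by
          refine Finset.sum_le_sum fun k _ => Finset.sum_le_sum fun j _ => ?_
          rw [← hexp]
          exact tailσ σ _ (diff_bound _ _ (hop j) (hop k)) _ _
      _ = ENNReal.ofReal (∑ k, ∑ j, Real.exp (-x) * (π j * π k)) := by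
          have hnn : ∀ k j, 0 ≤ Real.exp (-x) * (π j * π k) := fun k j =>
            mul_nonneg (Real.exp_pos _).le (mul_nonneg (hπpos j).le (hπpos k).le)
          rw [ENNReal.ofReal_sum_of_nonneg fun k _ => Finset.sum_nonneg fun j _ => hnn k j]
          refine Finset.sum_congr rfl fun k _ => ?_
          rw [ENNReal.ofReal_sum_of_nonneg fun j _ => hnn k j]
      _ = _ := by
          congr 1
          simp only [← Finset.mul_sum, ← Finset.sum_mul, hπ.2, one_mul, mul_one]
  have hsub : Eᶜ ⊆ {ω | ∀ j, sqNorm (muV A b (f + ξ ω) (θhat ω) - f) ≤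
            sqNorm ((A j).mulVec (f + ξ ω) + b j - f)
              + 92 * σ ^ 2 * Real.log (1 / π j) + 46 * σ ^ 2 * x} := by
    intro ω hω k
    apply determ σ f A b l (ξ ω) (θhat ω) (hθmem ω) (hθmin ω) x k
    intro j
    by_contra hc
    push Not at hc
    exact hω (Set.mem_iUnion.2 ⟨k, Set.mem_iUnion.2 ⟨j, hc⟩⟩)
  refine le_trans ?_ (measure_mono hsub)
  rw [prob_compl_eq_one_sub hEm]
  have he := Real.exp_pos (-x)
  calc ENNReal.ofReal (1 - 2 * Real.exp (-x)) ≤ ENNReal.ofReal (1 - Real.exp (-x)) :=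
        ENNReal.ofReal_le_ofReal (by linarith)
    _ = 1 - ENNReal.ofReal (Real.exp (-x)) := by
        rw [ENNReal.ofReal_sub _ he.le, ENNReal.ofReal_one]
    _ ≤ 1 - P E := tsub_le_tsub_left hPE 1

end
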